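/- arXiv:2109.00502 — 3 statements merged into one kernel-verified Lean document; each statement's English description precedes it below -/
import Mathlib

section
/- If a permutation σ of length n satisfies the up-up-down-down condition, then every square in σ has length either 4 or a multiple of 8. -/
/-- The permutation `σ` of length `n` has a square starting at position `k`
with half-length `ℓ`: the factors `(σ k, …, σ (k+ℓ-1))` and
`(σ (k+ℓ), …, σ (k+2ℓ-1))` are order-isomorphic. -/
def HasSquareAt {n : ℕ} (σ : Fin n → Fin n) (k ℓ : ℕ) : Prop :=
  2 ≤ ℓ ∧ ∃ hb : k + 2 * ℓ ≤ n, ∀ (i j : ℕ) (hi : i < ℓ) (hj : j < ℓ),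
    (σ ⟨k + i, by omega⟩ < σ ⟨k + j, by omega⟩ ↔
      σ ⟨k + ℓ + i, by omega⟩ < σ ⟨k + ℓ + j, by omega⟩)

/-- `σ` contains a square. -/
def ContainsSquare {n : ℕ} (σ : Fin n → Fin n) : Prop :=
  ∃ k ℓ : ℕ, HasSquareAt σ k ℓ

/-- `σ` is square-free: it contains no square. -/
def SquareFree {n : ℕ} (σ : Fin n → Fin n) : Prop :=
  ¬ ContainsSquare σ

/-- `π` (of length `n+1`) is a right-extension of `σ` (of length `n`):
the prefix `(π 0, …, π (n-1))` is order-isomorphic to `σ`. -/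
def IsRightExtension {n : ℕ} (σ : Fin n → Fin n) (π : Fin (n + 1) → Fin (n + 1)) : Prop :=
  ∀ i j : Fin n, π i.castSucc < π j.castSucc ↔ σ i < σ j

/-- `π` (of length `n+1`) is a left-extension of `σ` (of length `n`):
the suffix `(π 1, …, π n)` is order-isomorphic to `σ`. -/
def IsLeftExtension {n : ℕ} (σ : Fin n → Fin n) (π : Fin (n + 1) → Fin (n + 1)) : Prop :=
  ∀ i j : Fin n, π i.succ < π j.succ ↔ σ i < σ j

/-- `σ` is right-crucial: square-free, and every right-extension contains a square. -/
def RightCrucial {n : ℕ} (σ : Equiv.Perm (Fin n)) : Prop :=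
  SquareFree ⇑σ ∧ ∀ π : Equiv.Perm (Fin (n + 1)), IsRightExtension ⇑σ ⇑π → ContainsSquare ⇑π

/-- `σ` is left-crucial: square-free, and every left-extension contains a square. -/
def LeftCrucial {n : ℕ} (σ : Equiv.Perm (Fin n)) : Prop :=
  SquareFree ⇑σ ∧ ∀ π : Equiv.Perm (Fin (n + 1)), IsLeftExtension ⇑σ ⇑π → ContainsSquare ⇑π

/-- `σ` is bicrucial: both left-crucial and right-crucial. -/
def Bicrucial {n : ℕ} (σ : Equiv.Perm (Fin n)) : Prop :=
  LeftCrucial σ ∧ RightCrucial σ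

/-- `σ` satisfies the up-up-down-down condition. -/
def UpUpDownDown {n : ℕ} (σ : Fin n → Fin n) : Prop :=
  ∀ (i : ℕ) (h : i + 4 ≤ n),
    (σ ⟨i, by omega⟩ < σ ⟨i + 1, by omega⟩ ↔ σ ⟨i + 3, by omega⟩ < σ ⟨i + 2, by omega⟩)

/-!
Write each pair of consecutive entries as an ascent or a descent. The up-up-down-down condition
says that this pattern is negated by a shift by `2`, so a shift by `2 * m` preserves it if `m` is
even and negates it if `m` is odd. A square of half-length `ℓ ≥ 3` gives two consecutive positions
at which the pattern agrees with its shift by `ℓ`. If `ℓ = 2 * m`, one agreement already forces `m`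
to be even. If `ℓ = 2 * m + 1`, the two agreements relate the same two letters of the pattern
through shifts by `2 * m` and `2 * (m + 1)`, which have opposite signs, so they are incompatible.
-/

/-- A predicate on the positions `0, …, N - 1` which is negated by every shift by `c` that stays
below `N`: a finite-window version of `Function.Antiperiodic` for up-down patterns. -/
def AntiperiodicBelow (p : ℕ → Prop) (c N : ℕ) : Prop :=
  ∀ i, i + c < N → (p (i + c) ↔ ¬ p i)

namespace AntiperiodicBelow

variable {p : ℕ → Prop} {c N k ℓ : ℕ}

theorem add_mul_iff (hp : AntiperiodicBelow p c N) {i m : ℕ} (hi : i + c * m < N) :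
    p (i + c * m) ↔ (p i ↔ Even m) := by
  induction m with
  | zero => simp
  | succ m ih =>
    rw [mul_add_one, ← add_assoc] at hi ⊢
    rw [hp _ hi, ih (by omega), Nat.even_add_one]
    tauto

theorem four_dvd_of_iff_add (hp : AntiperiodicBelow p 2 N) (hN : k + 1 + ℓ < N)
    (h₀ : p k ↔ p (k + ℓ)) (h₁ : p (k + 1) ↔ p (k + 1 + ℓ)) : 4 ∣ ℓ := by
  obtain ⟨m, rfl | rfl⟩ := ℓ.even_or_odd'
  · have hm : Even m := by
      have hk := hp.add_mul_iff (i := k) (m := m) (by omega)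
      tauto
    exact mul_dvd_mul_left 2 hm.two_dvd
  · have hk : p (k + (2 * m + 1)) ↔ (p (k + 1) ↔ Even m) := by
      rw [← hp.add_mul_iff (by omega), add_assoc k, add_comm 1]
    have hk' : p (k + 1 + (2 * m + 1)) ↔ (p k ↔ ¬ Even m) := by
      rw [← Nat.even_add_one, ← hp.add_mul_iff (by omega)]
      ring_nf
    tauto

end AntiperiodicBelow

/-- Position `i` is an ascent of the word `σ`. Positions are natural numbers, to make shifts
convenient; the last position and those outside the word are not ascents. -/
def IsAscent {α : Type*} [LT α] {n : ℕ} (σ : Fin n → α) (i : ℕ) : Prop :=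
  ∃ hi : i + 1 < n, σ ⟨i, by omega⟩ < σ ⟨i + 1, hi⟩

theorem isAscent_iff {α : Type*} [LT α] {n : ℕ} {σ : Fin n → α} {i : ℕ} (hi : i + 1 < n) :
    IsAscent σ i ↔ σ ⟨i, by omega⟩ < σ ⟨i + 1, hi⟩ :=
  exists_prop_of_true hi

section Words

variable {n k ℓ : ℕ} {σ : Fin n → Fin n}

theorem UpUpDownDown.antiperiodicBelow_isAscent (h : UpUpDownDown σ)
    (hσ : ∀ (i : ℕ) (hi : i + 1 < n), σ ⟨i, by omega⟩ ≠ σ ⟨i + 1, hi⟩) :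
    AntiperiodicBelow (IsAscent σ) 2 (n - 1) := by
  intro i hi
  rw [isAscent_iff (by omega), isAscent_iff (by omega), h i (by omega)]
  exact (hσ (i + 2) (by omega)).le_iff_lt.symm.trans not_lt.symm

theorem HasSquareAt.isAscent_iff_add (hsq : HasSquareAt σ k ℓ) {i : ℕ} (hi : i + 1 < ℓ) :
    IsAscent σ (k + i) ↔ IsAscent σ (k + i + ℓ) := by
  obtain ⟨-, hn, hiso⟩ := hsq
  rw [add_right_comm, isAscent_iff (by omega), isAscent_iff (by omega)]
  exact hiso i (i + 1) (by omega) hi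

theorem square_length_of_upUpDownDown_general
    (hσ : ∀ (i : ℕ) (hi : i + 1 < n), σ ⟨i, by omega⟩ ≠ σ ⟨i + 1, hi⟩)
    (h : UpUpDownDown σ) (hsq : HasSquareAt σ k ℓ) :
    2 * ℓ = 4 ∨ 8 ∣ 2 * ℓ := by
  obtain ⟨hℓ, hn, -⟩ := id hsq
  obtain rfl | hℓ := hℓ.eq_or_lt
  · exact .inl rfl
  · have hdvd : 4 ∣ ℓ := (h.antiperiodicBelow_isAscent hσ).four_dvd_of_iff_add (by omega)
      (hsq.isAscent_iff_add (i := 0) (by omega)) (hsq.isAscent_iff_add (i := 1) hℓ)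
    exact .inr (mul_dvd_mul_left 2 hdvd)

end Words

/-- If a permutation satisfies the up-up-down-down condition, then every square in it
has length either 4 or a multiple of 8. -/
theorem square_length_of_upUpDownDown (n : ℕ) (σ : Equiv.Perm (Fin n))
    (h : UpUpDownDown ⇑σ) (k ℓ : ℕ) (hsq : HasSquareAt ⇑σ k ℓ) :
    2 * ℓ = 4 ∨ 8 ∣ 2 * ℓ :=
  square_length_of_upUpDownDown_general (fun i _ ↦ σ.injective.ne (by simp)) h hsq
end

section
/- The permutation (8, 2, 0, 21, 30, 20, 3, 4, 7, 5, 1, 31, 32, 22, 6, 9, 23, 12, 10, 25, 27, 24, 13, 14, 18, 15, 11, 28, 29, 26, 17, 19, 33, 16) of length 34 is bicrucial. -/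
/-! An extension of a permutation `σ` of length `n` by one entry is determined by the position and
the value of the new entry, so right- and left-cruciality each reduce to `n + 1` explicit sequences.
For the displayed permutation, every right-extension ends with a square of half-length `2` or `4`,
and every left-extension begins with one of half-length `2`, `4`, `8` or `16`.

Square-freeness starts from the up-down word, which is `↓↓↑↑↓↓↑↑…`: letters at distance two differ,
and the factors of length two distinguish the residues modulo `4`, so the half-length of a square
would have to be a multiple of `4`. -/

section Extension

variable {n : ℕ}

/-- The one-entry extension of `σ` whose entry at position `p` is `t`. The entries `≥ t` of `σ` are
raised by one, so that each value is taken once if `σ` is a permutation. -/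
def extendAt (σ : Fin n → Fin n) (p t : Fin (n + 1)) : Fin (n + 1) → Fin (n + 1) :=
  p.insertNth (α := fun _ ↦ Fin (n + 1)) t (t.succAbove ∘ σ)

theorem eq_extendAt_of_lt_iff_lt {σ : Equiv.Perm (Fin n)} {π : Equiv.Perm (Fin (n + 1))}
    {p : Fin (n + 1)}
    (h : ∀ i j, π (p.succAbove i) < π (p.succAbove j) ↔ σ i < σ j) :
    ⇑π = extendAt σ p (π p) := by
  let f : Fin n → Fin (n + 1) := π ∘ p.succAbove ∘ σ.symm
  have f_strictMono : StrictMono f := fun a b hab ↦ by simpa [f, h] using hab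
  have range_f : Set.range f = Set.range (π p).succAbove := by
    simp only [f, Set.range_comp, EquivLike.range_eq_univ, Set.image_univ, Fin.range_succAbove,
      Set.image_compl_eq π.bijective, Set.image_singleton]
  have f_eq : f = (π p).succAbove :=
    (f_strictMono.range_inj (Fin.strictMono_succAbove _)).1 range_f
  refine Fin.eq_insertNth_iff.2 ⟨rfl, funext fun i ↦ ?_⟩
  simpa [f, Fin.removeNth] using congrFun f_eq (σ i)

theorem IsRightExtension.eq_extendAt {σ : Equiv.Perm (Fin n)} {π : Equiv.Perm (Fin (n + 1))}
    (h : IsRightExtension σ π) : ⇑π = extendAt σ (Fin.last n) (π (Fin.last n)) :=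
  eq_extendAt_of_lt_iff_lt (by simpa only [IsRightExtension, Fin.succAbove_last] using h)

theorem rightCrucial_of_containsSquare_extendAt {σ : Equiv.Perm (Fin n)} (hσ : SquareFree σ)
    (h : ∀ t, ContainsSquare (extendAt σ (Fin.last n) t)) : RightCrucial σ := by
  refine ⟨hσ, fun π hπ ↦ ?_⟩
  rw [hπ.eq_extendAt]
  exact h _

theorem IsLeftExtension.eq_extendAt {σ : Equiv.Perm (Fin n)} {π : Equiv.Perm (Fin (n + 1))}
    (h : IsLeftExtension σ π) : ⇑π = extendAt σ 0 (π 0) :=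
  eq_extendAt_of_lt_iff_lt (by simpa only [IsLeftExtension, Fin.succAbove_zero] using h)

theorem leftCrucial_of_containsSquare_extendAt {σ : Equiv.Perm (Fin n)} (hσ : SquareFree σ)
    (h : ∀ t, ContainsSquare (extendAt σ 0 t)) : LeftCrucial σ := by
  refine ⟨hσ, fun π hπ ↦ ?_⟩
  rw [hπ.eq_extendAt]
  exact h _

end Extension

section Square

variable {n k ℓ : ℕ} {σ : Fin n → Fin n}

instance : Decidable (HasSquareAt σ k ℓ) :=
  decidable_of_iff
    (2 ≤ ℓ ∧ ∃ _ : k + 2 * ℓ ≤ n, ∀ i, ∀ hi : i < ℓ, ∀ j, ∀ hj : j < ℓ,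
      (σ ⟨k + i, by omega⟩ < σ ⟨k + j, by omega⟩ ↔
        σ ⟨k + ℓ + i, by omega⟩ < σ ⟨k + ℓ + j, by omega⟩))
    (and_congr_right' <| exists_congr fun _ ↦ forall_congr' fun _ ↦ forall_comm)

theorem HasSquareAt.four_dvd_of_ascent_iff
    (hσ : ∀ i, ∀ hi : i + 1 < n, σ ⟨i, by omega⟩ < σ ⟨i + 1, hi⟩ ↔ 2 ≤ i % 4)
    (h : HasSquareAt σ k ℓ) : 4 ∣ ℓ := by
  obtain ⟨two_le, le_n, order_iso⟩ := h
  have ascent_iff : ∀ i, i + 1 < ℓ → (2 ≤ (k + i) % 4 ↔ 2 ≤ (k + ℓ + i) % 4) := fun i hi ↦ by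
    rw [← hσ (k + i) (by omega), ← hσ (k + ℓ + i) (by omega)]
    exact order_iso i (i + 1) (by omega) hi
  have first := ascent_iff 0 (by omega)
  obtain rfl | three_le : ℓ = 2 ∨ 3 ≤ ℓ := by omega
  · omega
  · have second := ascent_iff 1 (by omega)
    omega

end Square

/-- The displayed sequence, with its entries in `Fin 34`. -/
def bicrucialSeq : Fin 34 → Fin 34 :=
  ![8, 2, 0, 21, 30, 20, 3, 4, 7, 5, 1, 31, 32, 22, 6, 9, 23, 12, 10, 25, 27, 24, 13, 14, 18, 15,
    11, 28, 29, 26, 17, 19, 33, 16]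

theorem bicrucialSeq_ascent_iff : ∀ i, ∀ hi : i + 1 < 34,
    bicrucialSeq ⟨i, by omega⟩ < bicrucialSeq ⟨i + 1, hi⟩ ↔ 2 ≤ i % 4 := by
  have h : ∀ i, ∀ hi : i < 33,
      bicrucialSeq ⟨i, by omega⟩ < bicrucialSeq ⟨i + 1, by omega⟩ ↔ 2 ≤ i % 4 := by
    decide +kernel
  exact fun i hi ↦ h i (by omega)

theorem not_hasSquareAt_bicrucialSeq_four_mul :
    ∀ m < 5, ∀ k < 34, ¬ HasSquareAt bicrucialSeq k (4 * m) := by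
  decide +kernel

theorem squareFree_bicrucialSeq : SquareFree bicrucialSeq := by
  rintro ⟨k, ℓ, h⟩
  obtain ⟨m, rfl⟩ := h.four_dvd_of_ascent_iff bicrucialSeq_ascent_iff
  have two_le := h.1
  obtain ⟨le_n, -⟩ := h.2
  exact not_hasSquareAt_bicrucialSeq_four_mul m (by omega) k (by omega) h

theorem containsSquare_extendAt_last_bicrucialSeq (t : Fin 35) :
    ContainsSquare (extendAt bicrucialSeq (Fin.last 34) t) := by
  have of_le : ∀ t ≤ 16, HasSquareAt (extendAt bicrucialSeq (Fin.last 34) t) 27 4 := by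
    decide +kernel
  have of_ge : ∀ t ≥ 17, HasSquareAt (extendAt bicrucialSeq (Fin.last 34) t) 31 2 := by
    decide +kernel
  obtain ht | ht : t ≤ 16 ∨ 17 ≤ t := by omega
  · exact ⟨27, 4, of_le t ht⟩
  · exact ⟨31, 2, of_ge t ht⟩

theorem containsSquare_extendAt_zero_bicrucialSeq (t : Fin 35) :
    ContainsSquare (extendAt bicrucialSeq 0 t) := by
  have of_eq_zero : HasSquareAt (extendAt bicrucialSeq 0 0) 0 16 := by
    decide +kernel
  have of_mem_Icc_one_two : ∀ t ∈ Set.Icc 1 2, HasSquareAt (extendAt bicrucialSeq 0 t) 0 8 := by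
    decide +kernel
  have of_mem_Icc_three_eight : ∀ t ∈ Set.Icc 3 8, HasSquareAt (extendAt bicrucialSeq 0 t) 0 4 := by
    decide +kernel
  have of_nine_le : ∀ t ≥ 9, HasSquareAt (extendAt bicrucialSeq 0 t) 0 2 := by
    decide +kernel
  obtain rfl | ht | ht | ht : t = 0 ∨ t ∈ Set.Icc 1 2 ∨ t ∈ Set.Icc 3 8 ∨ 9 ≤ t := by
    simp only [Set.mem_Icc]
    omega
  · exact ⟨0, 16, of_eq_zero⟩
  · exact ⟨0, 8, of_mem_Icc_one_two t ht⟩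
  · exact ⟨0, 4, of_mem_Icc_three_eight t ht⟩
  · exact ⟨0, 2, of_nine_le t ht⟩

/-- The displayed permutation of length 34 is bicrucial. -/
theorem bicrucial_example_34 (σ : Equiv.Perm (Fin 34))
    (hσ : ∀ i : Fin 34,
      (σ i : ℕ) = [8, 2, 0, 21, 30, 20, 3, 4, 7, 5, 1, 31, 32, 22, 6, 9, 23, 12, 10, 25,
        27, 24, 13, 14, 18, 15, 11, 28, 29, 26, 17, 19, 33, 16].getD (i : ℕ) 0) :
    Bicrucial σ := by
  have σ_eq : ⇑σ = bicrucialSeq :=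
    funext fun i ↦ Fin.ext ((hσ i).trans (by revert i; decide +kernel))
  have squareFree : SquareFree σ := σ_eq ▸ squareFree_bicrucialSeq
  constructor
  · exact leftCrucial_of_containsSquare_extendAt squareFree
      (σ_eq ▸ containsSquare_extendAt_zero_bicrucialSeq)
  · exact rightCrucial_of_containsSquare_extendAt squareFree
      (σ_eq ▸ containsSquare_extendAt_last_bicrucialSeq)
end

section
/- The number of square-free permutations of length 9 is exactly 3980. -/
/-!
Deleting the first letter of a permutation of length `n + 1` and standardizing the rest is a
bijection onto pairs (first value, permutation of length `n`). Every square either survives the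
deletion or starts at the deleted letter, so the square-free permutations of length `n + 1` are
found from those of length `n` by testing, for each of them and each new first value, only the
squares that start at the new letter. Run on words, this recursion reaches length 9 after a short
computation.
-/

open Equiv Function

variable {n : ℕ}

theorem hasSquareAt_iff_of_injective {σ : Fin n → Fin n} (hσ : Injective σ) (k ℓ : ℕ) :
    HasSquareAt σ k ℓ ↔ 2 ≤ ℓ ∧ ∃ _ : k + 2 * ℓ ≤ n, ∀ i (_ : i < ℓ) j (_ : j < i),
      (σ ⟨k + j, by omega⟩ < σ ⟨k + i, by omega⟩ ↔
        σ ⟨k + ℓ + j, by omega⟩ < σ ⟨k + ℓ + i, by omega⟩) := by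
  refine and_congr_right fun _ ↦ exists_congr fun hb ↦
    ⟨fun h i hi j hj ↦ h j i (hj.trans hi) hi, fun h i j hi hj ↦ ?_⟩
  have not_lt_iff {x y : ℕ} (hx : x < n) (hy : y < n) (hxy : x ≠ y) :
      σ ⟨x, hx⟩ < σ ⟨y, hy⟩ ↔ ¬ σ ⟨y, hy⟩ < σ ⟨x, hx⟩ := by
    have : σ ⟨x, hx⟩ ≠ σ ⟨y, hy⟩ := hσ.ne (by simpa using hxy)
    rw [not_lt, this.le_iff_lt]
  rcases lt_trichotomy i j with hij | rfl | hji
  · exact h j hj i hij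
  · simp only [lt_irrefl]
  · rw [not_lt_iff _ _ (by omega), h i hi j hji, ← not_lt_iff _ _ (by omega)]

namespace IsLeftExtension

variable {σ : Fin n → Fin n} {π : Fin (n + 1) → Fin (n + 1)}

theorem hasSquareAt_succ_iff (h : IsLeftExtension σ π) (k ℓ : ℕ) :
    HasSquareAt π (k + 1) ℓ ↔ HasSquareAt σ k ℓ := by
  have lt_iff {x y : ℕ} (hx : x + 1 < n + 1) (hy : y + 1 < n + 1) :
      π ⟨x + 1, hx⟩ < π ⟨y + 1, hy⟩ ↔ σ ⟨x, by omega⟩ < σ ⟨y, by omega⟩ := h ⟨x, _⟩ ⟨y, _⟩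
  simp only [HasSquareAt, Nat.add_right_comm _ 1, lt_iff, Nat.add_le_add_iff_right]

theorem squareFree_iff (h : IsLeftExtension σ π) :
    SquareFree π ↔ SquareFree σ ∧ ∀ ℓ, ¬ HasSquareAt π 0 ℓ := by
  simp only [SquareFree, ContainsSquare, not_exists, ← h.hasSquareAt_succ_iff]
  rw [and_comm, Nat.and_forall_add_one (p := fun k ↦ ∀ ℓ, ¬ HasSquareAt π k ℓ)]

end IsLeftExtension

/-- The left-extension of `τ` with first value `a`: each value `b ≥ a` of `τ` becomes `b + 1`. -/
def leftExtend (a : Fin (n + 1)) (τ : Perm (Fin n)) : Perm (Fin (n + 1)) :=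
  a.cycleRange⁻¹ * Perm.decomposeFin.symm (0, τ)

@[simp]
theorem leftExtend_zero (a : Fin (n + 1)) (τ : Perm (Fin n)) : leftExtend a τ 0 = a := by
  simp [leftExtend]

@[simp]
theorem leftExtend_succ (a : Fin (n + 1)) (τ : Perm (Fin n)) (i : Fin n) :
    leftExtend a τ i.succ = a.succAbove (τ i) := by
  simp [leftExtend]

theorem isLeftExtension_leftExtend (a : Fin (n + 1)) (τ : Perm (Fin n)) :
    IsLeftExtension τ (leftExtend a τ) := fun i j ↦ by
  simp only [leftExtend_succ, Fin.succAbove_lt_succAbove_iff]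

theorem exists_leftExtend_eq (π : Perm (Fin (n + 1))) : ∃ a τ, leftExtend a τ = π := by
  obtain ⟨⟨p, τ⟩, h⟩ := Perm.decomposeFin.symm.surjective ((π 0).cycleRange * π)
  obtain rfl : p = 0 := by simpa using DFunLike.congr_fun h 0
  exact ⟨π 0, τ, by rw [leftExtend, h, inv_mul_cancel_left]⟩

/-- The values of `σ` in order, as a list of natural numbers. -/
def word (σ : Perm (Fin n)) : List ℕ := List.ofFn fun i ↦ (σ i : ℕ)

theorem word_injective : Injective (word (n := n)) := fun _ _ h ↦
  Equiv.ext fun i ↦ Fin.ext (congrFun (List.ofFn_injective h) i)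

theorem getD_word (σ : Perm (Fin n)) {i : ℕ} (hi : i < n) : (word σ).getD i 0 = σ ⟨i, hi⟩ := by
  simp [word, hi]

theorem hasSquareAt_iff_word (σ : Perm (Fin n)) (k ℓ : ℕ) :
    HasSquareAt σ k ℓ ↔ 2 ≤ ℓ ∧ k + 2 * ℓ ≤ n ∧ ∀ i < ℓ, ∀ j < i,
      ((word σ).getD (k + j) 0 < (word σ).getD (k + i) 0 ↔
        (word σ).getD (k + ℓ + j) 0 < (word σ).getD (k + ℓ + i) 0) := by
  simp only [hasSquareAt_iff_of_injective σ.injective, Fin.lt_def, ← getD_word, exists_prop]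

/-- The list counterpart of `leftExtend`: prepend `a` after raising the letters `b ≥ a` by one. -/
def consRaise (a : ℕ) (w : List ℕ) : List ℕ := a :: w.map fun b ↦ if a ≤ b then b + 1 else b

theorem consRaise_injective2 : Injective2 consRaise := fun a a' w w' h ↦ by
  obtain ⟨rfl, h⟩ := List.cons.inj h
  refine ⟨rfl, List.map_injective_iff.2 (fun b c hbc ↦ ?_) h⟩
  split_ifs at hbc <;> omega

theorem word_leftExtend (a : Fin (n + 1)) (τ : Perm (Fin n)) :
    word (leftExtend a τ) = consRaise a (word τ) := by
  have val_succAbove (b : Fin n) : (a.succAbove b : ℕ) =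
      if (a : ℕ) ≤ b then (b : ℕ) + 1 else b := by
    simp only [Fin.succAbove, Fin.lt_def, Fin.val_castSucc]
    split_ifs <;> grind
  simp [word, consRaise, List.ofFn_succ, List.map_ofFn, val_succAbove, Function.comp_def]

/-- Prepending `a` to `w` by `consRaise` turns the first `2 * (ℓ + 1)` letters into a square. The
comparisons not involving `a` form a separate conjunct because it is the same for every `a`, so
that evaluation can share it. Meaningful for `2 * ℓ + 1 ≤ w.length` only, as `List.getD` reads `0`
past the end. -/
def CompletesSquare (w : List ℕ) (a ℓ : ℕ) : Prop :=
  (∀ i < ℓ, ∀ j < i, (w.getD j 0 < w.getD i 0 ↔ w.getD (ℓ + 1 + j) 0 < w.getD (ℓ + 1 + i) 0)) ∧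
    ∀ i < ℓ, (a ≤ w.getD i 0 ↔ w.getD ℓ 0 < w.getD (ℓ + 1 + i) 0)

instance (w : List ℕ) (a ℓ : ℕ) : Decidable (CompletesSquare w a ℓ) :=
  inferInstanceAs (Decidable (_ ∧ _))

section Comparisons

variable (a : Fin (n + 1)) (τ : Perm (Fin n)) {x y : ℕ}

theorem getD_word_leftExtend_succ_lt_succ_iff (hx : x < n) (hy : y < n) :
    (word (leftExtend a τ)).getD (x + 1) 0 < (word (leftExtend a τ)).getD (y + 1) 0 ↔
      (word τ).getD x 0 < (word τ).getD y 0 := by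
  rw [getD_word _ (Nat.succ_lt_succ hx), getD_word _ (Nat.succ_lt_succ hy), getD_word τ hx,
    getD_word τ hy]
  exact isLeftExtension_leftExtend a τ ⟨x, hx⟩ ⟨y, hy⟩

theorem getD_word_leftExtend_zero_lt_succ_iff (hx : x < n) :
    (word (leftExtend a τ)).getD 0 0 < (word (leftExtend a τ)).getD (x + 1) 0 ↔
      a ≤ (word τ).getD x 0 := by
  rw [getD_word _ n.succ_pos, getD_word _ (Nat.succ_lt_succ hx), getD_word τ hx]
  simp only [Fin.zero_eta, leftExtend_zero, ← Fin.succ_mk _ _ hx, leftExtend_succ, Fin.val_fin_lt,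
    Fin.lt_succAbove_iff_le_castSucc, Fin.le_def, Fin.val_castSucc]

end Comparisons

theorem hasSquareAt_leftExtend_zero_iff (a : Fin (n + 1)) (τ : Perm (Fin n)) (ℓ : ℕ) :
    HasSquareAt (leftExtend a τ) 0 (ℓ + 1) ↔
      ℓ < (n + 1) / 2 ∧ 0 < ℓ ∧ CompletesSquare (word τ) a ℓ := by
  have bounds : 2 ≤ ℓ + 1 ∧ 0 + 2 * (ℓ + 1) ≤ n + 1 ↔ ℓ < (n + 1) / 2 ∧ 0 < ℓ := by omega
  rw [hasSquareAt_iff_word, ← and_assoc, ← and_assoc, bounds]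
  refine and_congr_right fun ⟨_, _⟩ ↦ ?_
  simp only [CompletesSquare, Nat.forall_lt_succ_left, not_lt_zero, false_imp_iff, forall_const,
    true_and, zero_add, add_zero, ← add_assoc]
  rw [and_comm, ← forall₂_and]
  refine forall₂_congr fun i hi ↦ and_congr ?_ (forall₂_congr fun j hj ↦ ?_)
  · rw [getD_word_leftExtend_zero_lt_succ_iff a τ (by omega),
      getD_word_leftExtend_succ_lt_succ_iff a τ (by omega) (by omega)]
  · rw [getD_word_leftExtend_succ_lt_succ_iff a τ (by omega) (by omega),
      getD_word_leftExtend_succ_lt_succ_iff a τ (by omega) (by omega)]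

theorem squareFree_leftExtend_iff (a : Fin (n + 1)) (τ : Perm (Fin n)) :
    SquareFree (leftExtend a τ) ↔
      SquareFree τ ∧ ∀ ℓ < (n + 1) / 2, 0 < ℓ → ¬ CompletesSquare (word τ) a ℓ := by
  have not_zero : ¬ HasSquareAt (leftExtend a τ) 0 0 := fun h ↦ absurd h.1 (by decide)
  rw [(isLeftExtension_leftExtend a τ).squareFree_iff,
    ← Nat.and_forall_add_one (p := fun ℓ ↦ ¬ HasSquareAt (leftExtend a τ) 0 ℓ)]
  simp only [hasSquareAt_leftExtend_zero_iff, not_zero, not_false_eq_true, true_and, not_and]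

/-- The words of the square-free permutations of length `n`, grown by left-extension: a first letter
`a` is kept if no square starts at it. -/
def squareFreeWords : ℕ → List (List ℕ)
  | 0 => [[]]
  | n + 1 => (squareFreeWords n).flatMap fun w ↦
      ((List.range (n + 1)).filter fun a ↦
        ∀ ℓ < (n + 1) / 2, 0 < ℓ → ¬ CompletesSquare w a ℓ).map (consRaise · w)

theorem mem_squareFreeWords {w : List ℕ} :
    w ∈ squareFreeWords n ↔ ∃ σ : Perm (Fin n), SquareFree σ ∧ word σ = w := by
  induction n generalizing w with
  | zero =>
    have squareFree (σ : Perm (Fin 0)) : SquareFree σ := fun ⟨k, ℓ, hℓ, hb, _⟩ ↦ by omega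
    simp [squareFreeWords, squareFree, word, eq_comm]
  | succ n ih =>
    simp only [squareFreeWords, List.mem_flatMap, ih, List.mem_map, List.mem_filter,
      List.mem_range, decide_eq_true_eq]
    constructor
    · rintro ⟨_, ⟨τ, hτ, rfl⟩, a, ⟨ha, hfree⟩, rfl⟩
      exact ⟨leftExtend ⟨a, ha⟩ τ, (squareFree_leftExtend_iff _ _).2 ⟨hτ, hfree⟩,
        word_leftExtend _ _⟩
    · rintro ⟨σ, hσ, rfl⟩
      obtain ⟨a, τ, rfl⟩ := exists_leftExtend_eq σ
      obtain ⟨hτ, hfree⟩ := (squareFree_leftExtend_iff _ _).1 hσ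
      exact ⟨word τ, ⟨τ, hτ, rfl⟩, a, ⟨a.isLt, hfree⟩, (word_leftExtend a τ).symm⟩

theorem nodup_squareFreeWords (n : ℕ) : (squareFreeWords n).Nodup := by
  induction n with
  | zero => exact List.nodup_singleton _
  | succ n ih =>
    refine List.nodup_flatMap.2 ⟨fun w _ ↦ ?_, ih.imp fun hne ↦ ?_⟩
    · exact (List.nodup_range.filter _).map (consRaise_injective2.left w)
    · simp only [Function.onFun, List.disjoint_left, List.mem_map, not_exists, not_and]
      rintro _ ⟨a, _, rfl⟩ b _ h
      exact hne (consRaise_injective2 h).2.symm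

theorem card_squareFree_eq_length (n : ℕ) :
    Nat.card {σ : Perm (Fin n) // SquareFree σ} = (squareFreeWords n).length := by
  have image_word : word '' {σ : Perm (Fin n) | SquareFree σ} = (squareFreeWords n).toFinset := by
    ext w
    simp only [Set.mem_image, Set.mem_ofPred_eq, List.coe_toFinset, mem_squareFreeWords]
  calc Nat.card {σ : Perm (Fin n) // SquareFree σ}
      = (word '' {σ : Perm (Fin n) | SquareFree σ}).ncard :=
        (Set.ncard_image_of_injective _ word_injective).symm
    _ = (squareFreeWords n).length := by
        rw [image_word, Set.ncard_coe_finset,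
          List.toFinset_card_of_nodup (nodup_squareFreeWords n)]

theorem length_squareFreeWords_nine : (squareFreeWords 9).length = 3980 := by
  decide +kernel

/-- The number of square-free permutations of length 9 is exactly 3980. -/
theorem card_squareFree_9 :
    Nat.card {σ : Equiv.Perm (Fin 9) // SquareFree ⇑σ} = 3980 := by
  rw [card_squareFree_eq_length, length_squareFreeWords_nine]
end
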